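/- Let X be a centered integrable real random variable admitting a Stein kernel τ with τ(X) integrable. Then the total variation distance to the standard Gaussian satisfies d_TV(X, 𝒩) ≤ 2 E[|1 − τ(X)|]. -/

import Mathlib

open MeasureTheory ProbabilityTheory

/-- Total variation distance between two laws on `ℝ`, as a supremum over Borel sets. -/
noncomputable def dTV (μ ν : Measure ℝ) : ℝ :=
  ⨆ A : {s : Set ℝ // MeasurableSet s}, |(μ A.1).toReal - (ν A.1).toReal|

/-- The standard Gaussian law `N(0,1)` on `ℝ`. -/
noncomputable def stdGaussian : Measure ℝ := gaussianReal 0 1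

/-- `τ` is a Stein kernel for `X`: `E[X φ(X)] = E[φ'(X) τ(X)]` for every bounded
`C¹` function `φ` with bounded derivative. -/
def IsSteinKernel {Ω : Type*} [MeasureSpace Ω] (X : Ω → ℝ) (τ : ℝ → ℝ) : Prop :=
  ∀ φ : ℝ → ℝ, ContDiff ℝ 1 φ → (∃ C, ∀ x, |φ x| ≤ C) → (∃ C, ∀ x, |deriv φ x| ≤ C) →
    ∫ ω, X ω * φ (X ω) = ∫ ω, deriv φ (X ω) * τ (X ω)

/-!
For a continuous `h` with values in `[a, b]`, the Stein equation
`v f' x = (x - m) f x + (h x - E h(N))`, where `N` has law `N(m, v)`, is solved by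
`f x = E[(h(N) - E h(N)); N ≤ x] / (v p(x))`, with `p` the Gaussian density. Since
`E[N - m; N > x] = v p(x)`, the tails satisfy `(x - m) P(N > x) ≤ v p(x)`, and symmetrically on the
left, which traps `(x - m) f x` between `E h(N) - b` and `E h(N) - a`; hence `v |f'| ≤ b - a`.
Inserting `X` into the equation and applying the kernel identity to `f` gives
`E h(X) - E h(N) = E[f'(X) (v - T)]`, which is at most `(b - a) E|v - T| / v`. Indicators of
Borel sets are reached through closed sets and thickened indicators.
-/

open Set Filter Topology
open scoped NNReal

section TotalVariation

variable {E : Type*} [PseudoEMetricSpace E] [MeasurableSpace E] {μ ν : Measure E} {B : ℝ}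

lemma abs_measureReal_sub_le_of_forall_continuous [OpensMeasurableSpace E] [IsFiniteMeasure μ]
    [IsFiniteMeasure ν]
    (hB : ∀ h : E → ℝ, Continuous h → (∀ x, h x ∈ Icc 0 1) → |∫ x, h x ∂μ - ∫ x, h x ∂ν| ≤ B)
    {F : Set E} (hF : IsClosed F) : |μ.real F - ν.real F| ≤ B := by
  have radius_pos (n : ℕ) : (0 : ℝ) < 1 / (n + 1) := Nat.one_div_pos_of_nat
  have radius_lim : Tendsto (fun n : ℕ ↦ (1 : ℝ) / (n + 1)) atTop (𝓝 0) :=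
    tendsto_one_div_add_atTop_nhds_zero_nat
  have limit (ρ : Measure E) [IsFiniteMeasure ρ] :=
    tendsto_integral_thickenedIndicator_of_isClosed ρ hF radius_pos radius_lim
  refine le_of_tendsto ((limit μ).sub (limit ν)).abs (Eventually.of_forall fun n ↦ hB _ ?_ ?_)
  · fun_prop
  · exact fun x ↦ ⟨NNReal.coe_nonneg _, mod_cast thickenedIndicator_le_one (radius_pos n) F x⟩

lemma abs_measureReal_sub_le_of_forall_isClosed [BorelSpace E] [IsFiniteMeasure μ]
    [IsFiniteMeasure ν] (hB : ∀ F : Set E, IsClosed F → |μ.real F - ν.real F| ≤ B)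
    {A : Set E} (hA : MeasurableSet A) : |μ.real A - ν.real A| ≤ B := by
  refine le_of_forall_pos_le_add fun ε hε ↦ ?_
  obtain ⟨F, hFA, hF, hlt⟩ := hA.exists_isClosed_sdiff_lt (μ := μ + ν) (measure_ne_top _ _)
    (ENNReal.ofReal_pos.2 hε).ne'
  have sum_lt : μ.real (A \ F) + ν.real (A \ F) < ε := by
    rw [← measureReal_add_apply, measureReal_def]
    exact ENNReal.toReal_lt_of_lt_ofReal hlt
  rw [measureReal_sdiff hFA hF.measurableSet, measureReal_sdiff hFA hF.measurableSet] at sum_lt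
  have hμ : μ.real F ≤ μ.real A := measureReal_mono hFA
  have hν : ν.real F ≤ ν.real A := measureReal_mono hFA
  have closed := abs_le.1 (hB F hF)
  exact abs_le.2 ⟨by linarith, by linarith⟩

end TotalVariation

lemma dTV_le_of_forall_continuous {μ ν : Measure ℝ} [IsFiniteMeasure μ] [IsFiniteMeasure ν] {B : ℝ}
    (hB : ∀ h : ℝ → ℝ, Continuous h → (∀ x, h x ∈ Icc 0 1) → |∫ x, h x ∂μ - ∫ x, h x ∂ν| ≤ B) :
    dTV μ ν ≤ B :=
  have : Nonempty {s : Set ℝ // MeasurableSet s} := ⟨⟨∅, MeasurableSet.empty⟩⟩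
  ciSup_le fun A ↦ abs_measureReal_sub_le_of_forall_isClosed
    (fun _ ↦ abs_measureReal_sub_le_of_forall_continuous hB) A.2

lemma hasDerivAt_setIntegral_Iic {E : Type*} [NormedAddCommGroup E] [NormedSpace ℝ E]
    [CompleteSpace E] {f : ℝ → E} (hf : Continuous f) (hfi : Integrable f) (x : ℝ) :
    HasDerivAt (fun y ↦ ∫ t in Iic y, f t) (f x) x := by
  have split (y : ℝ) : ∫ t in Iic y, f t = (∫ t in Iic 0, f t) + ∫ t in (0 : ℝ)..y, f t := by
    rw [← intervalIntegral.integral_Iic_sub_Iic hfi.integrableOn hfi.integrableOn,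
      add_sub_cancel]
  rw [funext split]
  exact (hf.integral_hasStrictDerivAt 0 x).hasDerivAt.const_add _

lemma exists_abs_le_of_abs_sub_mul_le {f : ℝ → ℝ} (hf : Continuous f) {m K : ℝ}
    (hK : ∀ x, |(x - m) * f x| ≤ K) : ∃ C, ∀ x, |f x| ≤ C := by
  obtain ⟨C, hC⟩ :=
    (isCompact_closedBall m 1).exists_bound_of_continuousOn hf.continuousOn
  refine ⟨max C K, fun x ↦ ?_⟩
  rcases le_total |x - m| 1 with hx | hx
  · exact le_max_of_le_left (hC x hx)
  · refine le_max_of_le_right (le_trans ?_ (hK x))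
    rw [abs_mul]
    exact le_mul_of_one_le_left (abs_nonneg _) hx

section SetIntegral

variable {α : Type*} [MeasurableSpace α] {μ : Measure α} {u : α → ℝ} {s : Set α}

lemma setIntegral_sub_integral_eq_compl [IsProbabilityMeasure μ] (hu : Integrable u μ)
    (hs : MeasurableSet s) :
    ∫ x in s, (u x - ∫ y, u y ∂μ) ∂μ = ∫ x in sᶜ, (∫ y, u y ∂μ - u x) ∂μ := by
  have hsub : Integrable (fun x ↦ u x - ∫ y, u y ∂μ) μ := hu.sub (integrable_const _)
  have hzero : ∫ x, (u x - ∫ y, u y ∂μ) ∂μ = 0 := by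
    simp [integral_sub hu (integrable_const _)]
  rw [eq_sub_of_add_eq (integral_add_compl hs hsub), hzero, zero_sub, ← integral_neg]
  simp only [neg_sub]

lemma mul_setIntegral_mem_Icc [IsFiniteMeasure μ] (hu : Integrable u μ) (hs : MeasurableSet s)
    {l r y w : ℝ} (hl : l ≤ 0) (hr : 0 ≤ r) (hy : 0 ≤ y) (hw : y * μ.real s ≤ w)
    (hlr : ∀ x, u x ∈ Icc l r) : y * ∫ x in s, u x ∂μ ∈ Icc (l * w) (r * w) := by
  have lower : l * μ.real s ≤ ∫ x in s, u x ∂μ :=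
    setIntegral_ge_of_const_le_real hs (measure_ne_top _ _) (fun x _ ↦ (hlr x).1) hu.integrableOn
  have upper : ∫ x in s, u x ∂μ ≤ r * μ.real s :=
    (setIntegral_mono_on hu.integrableOn (integrableOn_const (measure_ne_top _ _)) hs
      fun x _ ↦ (hlr x).2).trans_eq (by rw [setIntegral_const, smul_eq_mul, mul_comm])
  constructor
  · calc l * w ≤ l * (y * μ.real s) := mul_le_mul_of_nonpos_left hw hl
      _ = y * (l * μ.real s) := by ring
      _ ≤ y * ∫ x in s, u x ∂μ := by gcongr
  · calc y * ∫ x in s, u x ∂μ ≤ y * (r * μ.real s) := by gcongr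
      _ = r * (y * μ.real s) := by ring
      _ ≤ r * w := by gcongr

end SetIntegral

section Gaussian

variable {m : ℝ} {v : ℝ≥0}

lemma hasDerivAt_gaussianPDFReal (m : ℝ) (v : ℝ≥0) (x : ℝ) :
    HasDerivAt (gaussianPDFReal m v) (-((x - m) / v) * gaussianPDFReal m v x) x := by
  have hexponent : HasDerivAt (fun t : ℝ ↦ -(t - m) ^ 2 / (2 * v)) (-((x - m) / v)) x := by
    refine ((((hasDerivAt_id x).sub_const m).pow 2).neg.div_const (2 * (v : ℝ))).congr_deriv ?_
    simp only [id_eq]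
    field_simp
    ring
  refine (hexponent.exp.const_mul (√(2 * Real.pi * v))⁻¹).congr_deriv ?_
  rw [gaussianPDFReal]
  ring

lemma continuous_gaussianPDFReal (m : ℝ) (v : ℝ≥0) : Continuous (gaussianPDFReal m v) :=
  continuous_iff_continuousAt.2 fun x ↦ (hasDerivAt_gaussianPDFReal m v x).continuousAt

lemma setIntegral_gaussianReal_eq_setIntegral_smul {E : Type*} [NormedAddCommGroup E]
    [NormedSpace ℝ E] (hv : v ≠ 0) {s : Set ℝ} (hs : MeasurableSet s) (f : ℝ → E) :
    ∫ x in s, f x ∂gaussianReal m v = ∫ x in s, gaussianPDFReal m v x • f x := by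
  rw [gaussianReal_of_var_ne_zero m hv, setIntegral_withDensity_eq_setIntegral_toReal_smul
    (measurable_gaussianPDF m v) (ae_of_all _ fun _ ↦ gaussianPDF_lt_top) f hs]
  simp only [toReal_gaussianPDF]

lemma integrable_gaussianReal_iff {E : Type*} [NormedAddCommGroup E]
    [NormedSpace ℝ E] (hv : v ≠ 0) {f : ℝ → E} :
    Integrable f (gaussianReal m v) ↔ Integrable fun x ↦ gaussianPDFReal m v x • f x := by
  rw [gaussianReal_of_var_ne_zero m hv, integrable_withDensity_iff_integrable_smul'
    (measurable_gaussianPDF m v) (ae_of_all _ fun _ ↦ gaussianPDF_lt_top)]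
  simp only [toReal_gaussianPDF]

lemma integrable_id_gaussianReal (m : ℝ) (v : ℝ≥0) : Integrable (fun x ↦ x) (gaussianReal m v) :=
  (memLp_id_gaussianReal 1).integrable le_rfl

lemma setIntegral_Ioi_sub_gaussianReal (hv : v ≠ 0) (x : ℝ) :
    ∫ t in Ioi x, (t - m) ∂gaussianReal m v = v * gaussianPDFReal m v x := by
  have hv' : (v : ℝ) ≠ 0 := mod_cast hv
  have hderiv (t : ℝ) : HasDerivAt (fun t ↦ -(v * gaussianPDFReal m v t))
      (gaussianPDFReal m v t • (t - m)) t := by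
    refine ((hasDerivAt_gaussianPDFReal m v t).const_mul (v : ℝ)).neg.congr_deriv ?_
    rw [smul_eq_mul]
    field_simp
  have hint : Integrable fun t ↦ gaussianPDFReal m v t • (t - m) :=
    (integrable_gaussianReal_iff hv).1 ((integrable_id_gaussianReal m v).sub (integrable_const m))
  have hlim : Tendsto (fun t ↦ -(v * gaussianPDFReal m v t)) atTop (𝓝 0) :=
    tendsto_zero_of_hasDerivAt_of_integrableOn_Ioi (fun t _ ↦ hderiv t) hint.integrableOn
      ((integrable_gaussianPDFReal m v).const_mul (v : ℝ)).neg.integrableOn (a := x)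
  rw [setIntegral_gaussianReal_eq_setIntegral_smul hv measurableSet_Ioi,
    integral_Ioi_of_hasDerivAt_of_tendsto' (fun t _ ↦ hderiv t) hint.integrableOn hlim,
    zero_sub, neg_neg]

lemma setIntegral_Iic_sub_gaussianReal (hv : v ≠ 0) (x : ℝ) :
    ∫ t in Iic x, (m - t) ∂gaussianReal m v = v * gaussianPDFReal m v x := by
  have hcompl := setIntegral_sub_integral_eq_compl (integrable_id_gaussianReal m v)
    (measurableSet_Ioi (a := x))
  rw [integral_id_gaussianReal, setIntegral_Ioi_sub_gaussianReal hv, compl_Ioi] at hcompl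
  exact hcompl.symm

lemma sub_mul_gaussianReal_Ioi_le (hv : v ≠ 0) (x : ℝ) :
    (x - m) * (gaussianReal m v).real (Ioi x) ≤ v * gaussianPDFReal m v x := by
  rw [← setIntegral_Ioi_sub_gaussianReal hv]
  exact setIntegral_ge_of_const_le_real measurableSet_Ioi (measure_ne_top _ _)
    (fun t ht ↦ sub_le_sub_right (le_of_lt ht) m)
    ((integrable_id_gaussianReal m v).sub (integrable_const m)).integrableOn

lemma sub_mul_gaussianReal_Iic_le (hv : v ≠ 0) (x : ℝ) :
    (m - x) * (gaussianReal m v).real (Iic x) ≤ v * gaussianPDFReal m v x := by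
  rw [← setIntegral_Iic_sub_gaussianReal hv]
  exact setIntegral_ge_of_const_le_real measurableSet_Iic (measure_ne_top _ _)
    (fun t ht ↦ sub_le_sub_left ht m)
    ((integrable_const m).sub (integrable_id_gaussianReal m v)).integrableOn

end Gaussian

/-- The solution `f` of the Stein equation `v f' x = (x - m) f x + (h x - E h(N))` for the Gaussian
law `N(m, v)` and the test function `h`. It is the solution vanishing at infinity; for `v = 0` it
takes the junk value `0`. -/
noncomputable def steinSolution (m : ℝ) (v : ℝ≥0) (h : ℝ → ℝ) (x : ℝ) : ℝ :=
  (∫ t in Iic x, (h t - ∫ s, h s ∂gaussianReal m v) ∂gaussianReal m v) /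
    (v * gaussianPDFReal m v x)

section SteinSolution

variable {m : ℝ} {v : ℝ≥0} {h : ℝ → ℝ} {a b : ℝ}

lemma hasDerivAt_steinSolution (hv : v ≠ 0) (hc : Continuous h)
    (hi : Integrable h (gaussianReal m v)) (x : ℝ) :
    HasDerivAt (steinSolution m v h)
      (((x - m) * steinSolution m v h x + (h x - ∫ s, h s ∂gaussianReal m v)) / v) x := by
  set c := ∫ s, h s ∂gaussianReal m v with hc_def
  have hv' : (v : ℝ) ≠ 0 := mod_cast hv
  have hpdf : gaussianPDFReal m v x ≠ 0 := (gaussianPDFReal_pos m v x hv).ne'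
  have hnum : HasDerivAt (fun y ↦ ∫ t in Iic y, (h t - c) ∂gaussianReal m v)
      (gaussianPDFReal m v x • (h x - c)) x := by
    simp_rw [setIntegral_gaussianReal_eq_setIntegral_smul hv measurableSet_Iic]
    exact hasDerivAt_setIntegral_Iic
      ((continuous_gaussianPDFReal m v).smul (hc.sub continuous_const))
      ((integrable_gaussianReal_iff hv).1 (hi.sub (integrable_const c))) x
  refine (hnum.div ((hasDerivAt_gaussianPDFReal m v x).const_mul (v : ℝ))
    (mul_ne_zero hv' hpdf)).congr_deriv ?_
  rw [steinSolution, ← hc_def, smul_eq_mul]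
  field_simp
  ring

lemma sub_mul_steinSolution_mem_Icc (hv : v ≠ 0) (hi : Integrable h (gaussianReal m v))
    (hab : ∀ x, h x ∈ Icc a b) (x : ℝ) :
    (x - m) * steinSolution m v h x ∈
      Icc (∫ s, h s ∂gaussianReal m v - b) (∫ s, h s ∂gaussianReal m v - a) := by
  set c := ∫ s, h s ∂gaussianReal m v with hc_def
  have hc : c ∈ Icc a b := (convex_Icc a b).integral_mem isClosed_Icc (ae_of_all _ hab) hi
  have hw : 0 < v * gaussianPDFReal m v x :=
    mul_pos (mod_cast pos_of_ne_zero hv) (gaussianPDFReal_pos m v x hv)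
  have hsub (t : ℝ) : c - h t ∈ Icc (c - b) (c - a) :=
    ⟨sub_le_sub_left (hab t).2 c, sub_le_sub_left (hab t).1 c⟩
  have tail {s : Set ℝ} (hs : MeasurableSet s) {y : ℝ} (hy : 0 ≤ y)
      (hys : y * (gaussianReal m v).real s ≤ v * gaussianPDFReal m v x) :=
    mul_setIntegral_mem_Icc ((integrable_const c).sub hi) hs (sub_nonpos.2 hc.2)
      (sub_nonneg.2 hc.1) hy hys hsub
  rw [steinSolution, ← hc_def, ← mul_div_assoc, mem_Icc, le_div_iff₀ hw, div_le_iff₀ hw]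
  rcases le_total m x with hmx | hxm
  · rw [hc_def, setIntegral_sub_integral_eq_compl hi measurableSet_Iic, compl_Iic, ← hc_def]
    exact tail measurableSet_Ioi (sub_nonneg.2 hmx) (sub_mul_gaussianReal_Ioi_le hv x)
  · have hneg : (x - m) * ∫ t in Iic x, (h t - c) ∂gaussianReal m v =
        (m - x) * ∫ t in Iic x, (c - h t) ∂gaussianReal m v := by
      rw [← neg_sub m x, neg_mul, ← mul_neg, ← integral_neg]
      simp only [neg_sub]
    rw [hneg]
    exact tail measurableSet_Iic (sub_nonneg.2 hxm) (sub_mul_gaussianReal_Iic_le hv x)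

lemma abs_deriv_steinSolution_le (hv : v ≠ 0) (hc : Continuous h)
    (hi : Integrable h (gaussianReal m v)) (hab : ∀ x, h x ∈ Icc a b) (x : ℝ) :
    |deriv (steinSolution m v h) x| ≤ (b - a) / v := by
  rw [(hasDerivAt_steinSolution hv hc hi x).deriv, abs_div, NNReal.abs_eq]
  have hbound := sub_mul_steinSolution_mem_Icc hv hi hab x
  have hx := hab x
  gcongr
  exact abs_le.2 ⟨by linarith [hbound.1, hx.1], by linarith [hbound.2, hx.2]⟩

lemma contDiff_steinSolution (hv : v ≠ 0) (hc : Continuous h)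
    (hi : Integrable h (gaussianReal m v)) : ContDiff ℝ 1 (steinSolution m v h) := by
  have hderiv := hasDerivAt_steinSolution hv hc hi
  have hdiff : Differentiable ℝ (steinSolution m v h) := fun x ↦ (hderiv x).differentiableAt
  have hcont := hdiff.continuous
  refine contDiff_one_iff_deriv.2 ⟨hdiff, ?_⟩
  rw [funext fun x ↦ (hderiv x).deriv]
  fun_prop

lemma exists_abs_steinSolution_le (hv : v ≠ 0) (hc : Continuous h)
    (hi : Integrable h (gaussianReal m v)) (hab : ∀ x, h x ∈ Icc a b) :
    ∃ C, ∀ x, |steinSolution m v h x| ≤ C :=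
  exists_abs_le_of_abs_sub_mul_le (contDiff_steinSolution hv hc hi).continuous fun x ↦
    abs_le_max_abs_abs (sub_mul_steinSolution_mem_Icc hv hi hab x).1
      (sub_mul_steinSolution_mem_Icc hv hi hab x).2

end SteinSolution

/-- The random variable `T` is a Stein kernel of `X` about `m`, in the sense that
`E[(X - m) φ(X)] = E[φ'(X) T]` for every bounded `C¹` function `φ` with bounded derivative.
Unlike in `IsSteinKernel`, `T` need not be a function of `X`. The identity is meaningful for
integrable `X` and `T`, since a Bochner integral that does not exist is `0`. -/
def SteinIdentity {Ω : Type*} [MeasurableSpace Ω] (P : Measure Ω) (X T : Ω → ℝ) (m : ℝ) : Prop :=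
  ∀ φ : ℝ → ℝ, ContDiff ℝ 1 φ → (∃ C, ∀ x, |φ x| ≤ C) → (∃ C, ∀ x, |deriv φ x| ≤ C) →
    ∫ ω, (X ω - m) * φ (X ω) ∂P = ∫ ω, deriv φ (X ω) * T ω ∂P

namespace SteinIdentity

variable {Ω : Type*} [MeasurableSpace Ω] {P : Measure Ω} [IsProbabilityMeasure P] {X T : Ω → ℝ}
  {m : ℝ} {v : ℝ≥0} {h : ℝ → ℝ} {a b : ℝ}

lemma integral_sub_integral_gaussianReal (hXT : SteinIdentity P X T m) (hX : Integrable X P)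
    (hT : Integrable T P) (hv : v ≠ 0) (hc : Continuous h) (hab : ∀ x, h x ∈ Icc a b) :
    ∫ ω, h (X ω) ∂P - ∫ x, h x ∂gaussianReal m v =
      ∫ ω, deriv (steinSolution m v h) (X ω) * (v - T ω) ∂P := by
  set f := steinSolution m v h
  set c := ∫ x, h x ∂gaussianReal m v
  have hi : Integrable h (gaussianReal m v) :=
    .of_mem_Icc a b hc.aemeasurable (ae_of_all _ hab)
  have hf : ContDiff ℝ 1 f := contDiff_steinSolution hv hc hi
  obtain ⟨C, hC⟩ := exists_abs_steinSolution_le hv hc hi hab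
  have hf' := abs_deriv_steinSolution_le hv hc hi hab
  have hf'X : AEStronglyMeasurable (fun ω ↦ deriv f (X ω)) P :=
    (hf.continuous_deriv le_rfl).comp_aestronglyMeasurable hX.1
  have hhX : Integrable (fun ω ↦ h (X ω)) P :=
    .of_mem_Icc a b (hc.measurable.comp_aemeasurable hX.aemeasurable) (ae_of_all _ fun _ ↦ hab _)
  have hXf : Integrable (fun ω ↦ (X ω - m) * f (X ω)) P :=
    (hX.sub (integrable_const m)).mul_bdd (hf.continuous.comp_aestronglyMeasurable hX.1)
      (ae_of_all _ fun _ ↦ hC _)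
  have hf'v : Integrable (fun ω ↦ deriv f (X ω) * v) P :=
    (integrable_const (v : ℝ)).bdd_mul hf'X (ae_of_all _ fun _ ↦ hf' _)
  have hf'T : Integrable (fun ω ↦ deriv f (X ω) * T ω) P :=
    hT.bdd_mul hf'X (ae_of_all _ fun _ ↦ hf' _)
  have stein_eq (x : ℝ) : h x - c = deriv f x * v - (x - m) * f x := by
    rw [(hasDerivAt_steinSolution hv hc hi x).deriv, div_mul_cancel₀ _ (mod_cast hv)]
    ring
  calc ∫ ω, h (X ω) ∂P - c = ∫ ω, (h (X ω) - c) ∂P := by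
        simp [integral_sub hhX (integrable_const c)]
    _ = ∫ ω, deriv f (X ω) * v ∂P - ∫ ω, (X ω - m) * f (X ω) ∂P := by
        simp_rw [stein_eq]
        exact integral_sub hf'v hXf
    _ = ∫ ω, deriv f (X ω) * v ∂P - ∫ ω, deriv f (X ω) * T ω ∂P := by
        rw [hXT f hf ⟨C, hC⟩ ⟨_, hf'⟩]
    _ = ∫ ω, deriv f (X ω) * (v - T ω) ∂P := by
        simp_rw [mul_sub]
        exact (integral_sub hf'v hf'T).symm

lemma abs_integral_sub_integral_gaussianReal_le (hXT : SteinIdentity P X T m)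
    (hX : Integrable X P) (hT : Integrable T P) (hv : v ≠ 0) (hc : Continuous h)
    (hab : ∀ x, h x ∈ Icc a b) :
    |∫ ω, h (X ω) ∂P - ∫ x, h x ∂gaussianReal m v| ≤ (b - a) / v * ∫ ω, |v - T ω| ∂P := by
  have hi : Integrable h (gaussianReal m v) :=
    .of_mem_Icc a b hc.aemeasurable (ae_of_all _ hab)
  rw [hXT.integral_sub_integral_gaussianReal hX hT hv hc hab, ← integral_const_mul,
    ← Real.norm_eq_abs]
  have hvT : Integrable (fun ω ↦ v - T ω) P := (integrable_const (v : ℝ)).sub hT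
  refine norm_integral_le_of_norm_le (hvT.abs.const_mul _) (ae_of_all _ fun ω ↦ ?_)
  rw [Real.norm_eq_abs, abs_mul]
  gcongr
  exact abs_deriv_steinSolution_le hv hc hi hab _

end SteinIdentity

lemma IsSteinKernel.steinIdentity {Ω : Type*} [MeasureSpace Ω] {X : Ω → ℝ} {τ : ℝ → ℝ}
    (hX : IsSteinKernel X τ) : SteinIdentity ℙ X (fun ω ↦ τ (X ω)) 0 := by
  simpa only [SteinIdentity, sub_zero] using! hX

theorem stein_tv_bound_general {Ω : Type*} [MeasurableSpace Ω] {P : Measure Ω}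
    [IsProbabilityMeasure P] {X T : Ω → ℝ} {m : ℝ} {v : ℝ≥0} (hX : Integrable X P)
    (hT : Integrable T P) (hXT : SteinIdentity P X T m) (hv : v ≠ 0) :
    dTV (P.map X) (gaussianReal m v) ≤ (∫ ω, |v - T ω| ∂P) / v := by
  have : IsProbabilityMeasure (P.map X) := Measure.isProbabilityMeasure_map hX.aemeasurable
  refine dTV_le_of_forall_continuous fun h hc h01 ↦ ?_
  rw [integral_map hX.aemeasurable hc.aestronglyMeasurable]
  refine (hXT.abs_integral_sub_integral_gaussianReal_le hX hT hv hc h01).trans_eq ?_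
  ring

theorem stein_tv_bound
    {Ω : Type*} [MeasureSpace Ω] [IsProbabilityMeasure (ℙ : Measure Ω)]
    (X : Ω → ℝ) (τ : ℝ → ℝ) (hXm : Measurable X) (hτm : Measurable τ)
    (hXint : Integrable X) (hXcentered : ∫ ω, X ω = 0)
    (hτint : Integrable (fun ω => τ (X ω)))
    (hkernel : IsSteinKernel X τ) :
    dTV (Measure.map X ℙ) stdGaussian ≤ 2 * ∫ ω, |1 - τ (X ω)| := by
  have hsharp : dTV (Measure.map X ℙ) stdGaussian ≤ ∫ ω, |1 - τ (X ω)| := by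
    simpa using! stein_tv_bound_general hXint hτint hkernel.steinIdentity one_ne_zero
  exact hsharp.trans (le_mul_of_one_le_left (integral_nonneg fun _ ↦ abs_nonneg _) one_le_two)
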